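/- Let t ∈ (0,1). For each n ≥ 1, let P_n and Q_n be polynomials of degree n all of whose roots are real. Assume that the empirical measures of the roots of P_n and of Q_n both converge weakly, as n → ∞, to the same probability measure μ_0 on ℝ, and that the empirical measure of the roots of the ⌊tn⌋-th derivative of P_n converges weakly to a probability measure μ_t. Then the empirical measure of the roots of the ⌊tn⌋-th derivative of Q_n also converges weakly to μ_t. -/

import Mathlib

/-! Write `N_P(s)` for the number of roots of `P` in `(-∞, s]`. The proof rests on a deterministic
fact: if `P` and `Q` are real-rooted of positive degree and `N_P ≤ N_Q + m` everywhere, then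
`N_{P'} ≤ N_{Q'} + m` everywhere (`rootCount_derivative_le_of_le`).

To see it, let `s` avoid all roots. By Rolle's theorem with multiplicities and a parity count of
signs, `N_{P'}(s) = N_P(s)` if `(P' / P)(s) < 0`, and `N_{P'}(s) = N_P(s) - 1` if
`(P' / P)(s) > 0` (`rootCount_derivative`). The claim is then immediate unless
`N_P(s) = N_Q(s) + m`. In that case `P` has at least as many roots as `Q` in every interval
`(u, s]`, and at most as many in every interval `(s, u]`; hence
`(Q' / Q)(s) = ∑ 1 / (s - y) ≤ ∑ 1 / (s - x) = (P' / P)(s)` (`sum_inv_le`), and the claim follows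
again.

Iterating, and translating `P`, shows that an inequality `N_P(s - ε) ≤ N_Q(s) + m` for all `s`
passes to derivatives of every order (`rootCount_iterate_shift`). Weak convergence of both root
measures to `μ₀` provides such inequalities with `m ≤ ε n`, because the Lévy–Prokhorov metric
metrizes weak convergence. As the `⌊tn⌋`-th derivative still has degree at least `(1 - t) n`, the
root measures of the derivatives of `P_n` and `Q_n` are asymptotically Lévy close, so they have
the same weak limit. -/

open Polynomial MeasureTheory Filter Topology

/-- The empirical measure of the roots (counted with multiplicity) of a real polynomial:
`(1/deg) Σ δ_z` over the roots `z`. -/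
noncomputable def rootMeasure (P : Polynomial ℝ) : Measure ℝ :=
  (P.natDegree : ENNReal)⁻¹ • (P.roots.map Measure.dirac).sum

/-! ### Counting roots -/

/-- The number of roots of `P`, with multiplicity, in `(-∞, s]`. -/
noncomputable def rootCount (P : ℝ[X]) (s : ℝ) : ℕ := P.roots.countP (· ≤ s)

/-- Rolle's theorem with multiplicities, localized to an order-connected set. -/
lemma countP_roots_le_derivative (P : ℝ[X]) (S : Set ℝ) (hS : S.OrdConnected)
    [DecidablePred (· ∈ S)] :
    P.roots.countP (· ∈ S) ≤ (derivative P).roots.countP (· ∈ S) + 1 := by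
  classical
  rcases eq_or_ne (derivative P) 0 with hp' | hp'
  · rw [eq_C_of_derivative_eq_zero hp']
    simp
  have hp : P ≠ 0 := ne_of_apply_ne derivative (by rwa [derivative_zero])
  rw [Multiset.countP_eq_card_filter, Multiset.countP_eq_card_filter]
  set A := P.roots.filter (· ∈ S) with hA
  set B := (derivative P).roots.filter (· ∈ S) with hB
  have hrolle : A.toFinset.card ≤ (B.toFinset \ A.toFinset).card + 1 := by
    refine Finset.card_le_sdiff_of_interleaved fun x hx y hy hxy _ => ?_
    rw [Multiset.mem_toFinset, hA, Multiset.mem_filter, mem_roots hp] at hx hy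
    obtain ⟨z, hz1, hz2⟩ := exists_deriv_eq_zero hxy P.continuousOn (hx.1.trans hy.1.symm)
    refine ⟨z, ?_, hz1⟩
    rw [Multiset.mem_toFinset, hB, Multiset.mem_filter, mem_roots hp', IsRoot, ← P.deriv]
    exact ⟨hz2, hS.out hx.2 hy.2 ⟨hz1.1.le, hz1.2.le⟩⟩
  have hmult : ∀ x ∈ A.toFinset, A.count x ≤ B.count x + 1 := by
    intro x hx
    have hxS : x ∈ S := (Multiset.mem_filter.1 (Multiset.mem_toFinset.1 hx)).2
    rw [hA, hB, Multiset.count_filter_of_pos hxS, Multiset.count_filter_of_pos hxS,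
      count_roots, count_roots]
    have := rootMultiplicity_sub_one_le_derivative_rootMultiplicity P x
    omega
  have hnew : (B.toFinset \ A.toFinset).card ≤ ∑ x ∈ B.toFinset \ A.toFinset, B.count x := by
    rw [Finset.card_eq_sum_ones]
    refine Finset.sum_le_sum fun x hx => ?_
    exact Multiset.one_le_count_iff_mem.2 (Multiset.mem_toFinset.1 (Finset.mem_sdiff.1 hx).1)
  -- Each distinct root of `P` loses at most one in multiplicity, and Rolle's zeros of `P'`
  -- between distinct roots of `P` make up for all of these losses but one.
  calc A.card = ∑ x ∈ A.toFinset, A.count x := (Multiset.toFinset_sum_count_eq _).symm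
    _ ≤ ∑ x ∈ A.toFinset, (B.count x + 1) := Finset.sum_le_sum hmult
    _ = ∑ x ∈ A.toFinset, B.count x + A.toFinset.card := by
      rw [Finset.sum_add_distrib, Finset.card_eq_sum_ones]
    _ ≤ ∑ x ∈ A.toFinset, B.count x + (∑ x ∈ B.toFinset \ A.toFinset, B.count x + 1) := by
      omega
    _ = B.card + 1 := by
      rw [← add_assoc, ← Finset.sum_union Finset.disjoint_sdiff, Finset.union_sdiff_self_eq_union,
        ← Multiset.toFinset_sum_count_eq, ← Finset.sum_subset Finset.subset_union_right]
      intro x _ hx₂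
      simpa only [Multiset.mem_toFinset, Multiset.count_eq_zero] using hx₂

lemma splits_derivative {P : ℝ[X]} (hP : P.Splits) : (derivative P).Splits := by
  have h1 := card_roots_le_derivative P
  have h2 := (derivative P).card_roots'
  rw [splits_iff_card_roots] at hP ⊢
  rw [natDegree_derivative] at h2 ⊢
  omega

lemma rootCount_add_countP (P : ℝ[X]) (hP : P.Splits) (s : ℝ) :
    rootCount P s + P.roots.countP (s < ·) = P.natDegree := by
  rw [← splits_iff_card_roots.1 hP, Multiset.card_eq_countP_add_countP (· ≤ s), rootCount]
  simp only [not_le]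

lemma sign_prod (A : Multiset ℝ) (s : ℝ) (h : ∀ a ∈ A, a ≠ s) :
    0 < (-1 : ℝ) ^ (A.countP (s < ·)) * (A.map (s - ·)).prod := by
  induction A using Multiset.induction_on with
  | empty => simp
  | cons a A ih =>
    have ih := ih fun b hb => h b (Multiset.mem_cons_of_mem hb)
    have ha := h a (Multiset.mem_cons_self a A)
    rw [Multiset.map_cons, Multiset.prod_cons]
    by_cases hs : s < a
    · rw [Multiset.countP_cons_of_pos _ hs, pow_succ]
      have := mul_pos ih (sub_pos.2 hs)
      linarith
    · rw [Multiset.countP_cons_of_neg _ hs]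
      have := mul_pos ih (sub_pos.2 (lt_of_le_of_ne (not_lt.1 hs) ha))
      linarith

lemma sign_eval {P : ℝ[X]} (hP : P.Splits) {s : ℝ} (hs : P.eval s ≠ 0) :
    0 < (-1 : ℝ) ^ (P.roots.countP (s < ·)) * (P.leadingCoeff * P.eval s) := by
  have h0 : P ≠ 0 := by rintro rfl; simp at hs
  have := sign_prod P.roots s (by
    rintro a ha rfl
    exact hs ((mem_roots h0).1 ha))
  rw [hP.eval_eq_prod_roots]
  have h2 : 0 < P.leadingCoeff * P.leadingCoeff :=
    mul_self_pos.2 (leadingCoeff_ne_zero.2 h0)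
  have := mul_pos this h2
  linarith

lemma rootCount_le_derivative (P : ℝ[X]) (s : ℝ) :
    rootCount P s ≤ rootCount (derivative P) s + 1 :=
  countP_roots_le_derivative P (Set.Iic s) Set.ordConnected_Iic

lemma rootCount_derivative_le {P : ℝ[X]} (hP : P.Splits) (s : ℝ) :
    rootCount (derivative P) s ≤ rootCount P s := by
  have h1 := rootCount_add_countP P hP s
  have h2 := rootCount_add_countP _ (splits_derivative hP) s
  have h3 : P.roots.countP (s < ·) ≤ (derivative P).roots.countP (s < ·) + 1 :=
    countP_roots_le_derivative P (Set.Ioi s) Set.ordConnected_Ioi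
  rw [natDegree_derivative] at h2
  omega

/-- Away from the roots of `P` and `P'`, the sign of `P' / P` at `s` decides which of the two
values permitted by Rolle's theorem the number of roots of `P'` in `(-∞, s]` takes. -/
lemma rootCount_derivative {P : ℝ[X]} (hP : P.Splits) (hd : P.natDegree ≠ 0) {s : ℝ}
    (hs : P.eval s ≠ 0) (hs' : (derivative P).eval s ≠ 0) :
    (rootCount (derivative P) s = rootCount P s ∧ (derivative P).eval s / P.eval s < 0) ∨
    (rootCount (derivative P) s + 1 = rootCount P s ∧ 0 < (derivative P).eval s / P.eval s) := by
  have h1 := rootCount_add_countP P hP s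
  have h2 := rootCount_add_countP _ (splits_derivative hP) s
  have h3 := rootCount_le_derivative P s
  have h4 := rootCount_derivative_le hP s
  rw [natDegree_derivative] at h2
  have e1 := sign_eval hP hs
  have e2 := sign_eval (splits_derivative hP) hs'
  rw [leadingCoeff_derivative] at e2
  have hprod := mul_pos e1 e2
  have hpos : 0 ≤ P.leadingCoeff ^ 2 * P.natDegree := by positivity
  rcases (show rootCount (derivative P) s = rootCount P s ∨
    rootCount (derivative P) s + 1 = rootCount P s by omega) with h | h
  · refine Or.inl ⟨h, ?_⟩
    have hpar : P.roots.countP (s < ·) = (derivative P).roots.countP (s < ·) + 1 := by omega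
    have hsq : ((-1 : ℝ) ^ ((derivative P).roots.countP (s < ·))) ^ 2 = 1 := by
      rw [← pow_mul, mul_comm, pow_mul]; simp
    rw [hpar, pow_succ] at hprod
    have : 0 < (P.leadingCoeff ^ 2 * P.natDegree) * -((derivative P).eval s * P.eval s) := by
      calc _ < _ := hprod
        _ = ((-1 : ℝ) ^ ((derivative P).roots.countP (s < ·))) ^ 2 *
          ((P.leadingCoeff ^ 2 * P.natDegree) * -((derivative P).eval s * P.eval s)) := by ring
        _ = _ := by rw [hsq, one_mul]
    have := pos_of_mul_pos_right this hpos
    rw [div_neg_iff, ← mul_neg_iff]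
    linarith
  · refine Or.inr ⟨h, ?_⟩
    have hpar : P.roots.countP (s < ·) = (derivative P).roots.countP (s < ·) := by omega
    have hsq : ((-1 : ℝ) ^ ((derivative P).roots.countP (s < ·))) ^ 2 = 1 := by
      rw [← pow_mul, mul_comm, pow_mul]; simp
    rw [hpar] at hprod
    have : 0 < (P.leadingCoeff ^ 2 * P.natDegree) * ((derivative P).eval s * P.eval s) := by
      calc _ < _ := hprod
        _ = ((-1 : ℝ) ^ ((derivative P).roots.countP (s < ·))) ^ 2 *
          ((P.leadingCoeff ^ 2 * P.natDegree) * ((derivative P).eval s * P.eval s)) := by ring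
        _ = _ := by rw [hsq, one_mul]
    have := pos_of_mul_pos_right this hpos
    rw [div_pos_iff, ← mul_pos_iff]
    exact this

/-! ### Comparison of logarithmic derivatives -/

/-- Stochastic domination for finite multisets: if `B` has at least as many elements as `A` in
every ray `[u, ∞)`, then sums of nonnegative increasing functions over `A` are at most those
over `B`. -/
lemma sum_le_of_countP_le {α : Type*} [LinearOrder α] (T : Set α) (f : α → ℝ)
    (hf : MonotoneOn f T) (hf0 : ∀ x ∈ T, 0 ≤ f x) (A B : Multiset α)
    (hA : ∀ a ∈ A, a ∈ T) (hB : ∀ b ∈ B, b ∈ T)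
    (h : ∀ u, A.countP (u ≤ ·) ≤ B.countP (u ≤ ·)) :
    (A.map f).sum ≤ (B.map f).sum := by
  induction hn : A.card generalizing A B with
  | zero =>
    rw [Multiset.card_eq_zero.1 hn]
    simp only [Multiset.map_zero, Multiset.sum_zero]
    refine Multiset.sum_nonneg fun x hx => ?_
    obtain ⟨b, hb, rfl⟩ := Multiset.mem_map.1 hx
    exact hf0 b (hB b hb)
  | succ n ih =>
    have exists_max : ∀ C : Multiset α, (∃ c, c ∈ C) → ∃ c ∈ C, ∀ x ∈ C, x ≤ c := by
      rintro C ⟨c, hc⟩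
      obtain ⟨d, hd, hd'⟩ := C.toFinset.exists_max_image id ⟨c, Multiset.mem_toFinset.2 hc⟩
      exact ⟨d, Multiset.mem_toFinset.1 hd, fun x hx => hd' x (Multiset.mem_toFinset.2 hx)⟩
    -- Pair the largest elements of `A` and `B` and remove both.
    obtain ⟨a, ha, hamax⟩ := exists_max A (Multiset.card_pos_iff_exists_mem.1 (by omega))
    obtain ⟨b', hb', hab'⟩ := Multiset.countP_pos.1
      ((Multiset.countP_pos_of_mem (p := (a ≤ ·)) ha le_rfl).trans_le (h a))
    obtain ⟨b, hb, hbmax⟩ := exists_max B ⟨b', hb'⟩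
    have hab : a ≤ b := hab'.trans (hbmax b' hb')
    obtain ⟨A', rfl⟩ := Multiset.exists_cons_of_mem ha
    obtain ⟨B', rfl⟩ := Multiset.exists_cons_of_mem hb
    have := ih A' B' (fun x hx => hA x (Multiset.mem_cons_of_mem hx))
      (fun x hx => hB x (Multiset.mem_cons_of_mem hx)) (by
        intro u
        by_cases hu : u ≤ a
        · have := h u
          rwa [Multiset.countP_cons_of_pos _ hu, Multiset.countP_cons_of_pos _ (hu.trans hab),
            Nat.add_le_add_iff_right] at this
        · rw [Multiset.countP_eq_zero.2]
          · exact Nat.zero_le _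
          · intro x hx hux
            exact hu (hux.trans (hamax x (Multiset.mem_cons_of_mem hx)))) (by
        simpa using hn)
    rw [Multiset.map_cons, Multiset.map_cons, Multiset.sum_cons, Multiset.sum_cons]
    exact add_le_add (hf (hA a ha) (hB b hb) hab) this

lemma countP_le_add_countP_Ioc (A : Multiset ℝ) {u s : ℝ} (hus : u ≤ s) :
    A.countP (· ≤ u) + A.countP (fun x => u < x ∧ x ≤ s) = A.countP (· ≤ s) := by
  induction A using Multiset.induction_on with
  | empty => simp
  | cons a A ih =>
    simp only [Multiset.countP_cons]
    split_ifs with h1 h2 h3 h3 h4 h5 h5 <;> grind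

/-- Slightly to the left of `u`, the rays `(v, ∞)` and `[u, ∞)` contain the same points of `A`. -/
lemma eventually_nhdsLT (A : Multiset ℝ) (u : ℝ) :
    ∀ᶠ v in 𝓝[<] u, ∀ a ∈ A, (u ≤ a ↔ v < a) := by
  have : ∀ᶠ v in 𝓝[<] u, ∀ a ∈ A.toFinset, (u ≤ a ↔ v < a) := by
    rw [Filter.eventually_all_finset]
    intro a _
    by_cases h : u ≤ a
    · filter_upwards [self_mem_nhdsWithin] with v hv
      exact ⟨fun _ => lt_of_lt_of_le hv h, fun _ => h⟩
    · filter_upwards [Ioo_mem_nhdsLT (not_le.1 h)] with v hv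
      exact ⟨fun h' => absurd h' h, fun h' => absurd hv.1 (not_lt.2 h'.le)⟩
  simpa using this

/-- Points slightly to the right of `s` avoid `A` and have the same points of `A` below them
as `s`. -/
lemma eventually_nhdsGT (A : Multiset ℝ) (s : ℝ) :
    ∀ᶠ v in 𝓝[>] s, ∀ a ∈ A, a ≠ v ∧ (a ≤ v ↔ a ≤ s) := by
  have : ∀ᶠ v in 𝓝[>] s, ∀ a ∈ A.toFinset, a ≠ v ∧ (a ≤ v ↔ a ≤ s) := by
    rw [Filter.eventually_all_finset]
    intro a _
    by_cases h : a ≤ s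
    · filter_upwards [self_mem_nhdsWithin] with v hv
      have : s < v := hv
      exact ⟨(h.trans_lt this).ne, fun _ => h, fun _ => (h.trans_lt this).le⟩
    · filter_upwards [Ioo_mem_nhdsGT (not_le.1 h)] with v hv
      exact ⟨hv.2.ne', fun h' => absurd hv.2 (not_lt.2 h'), fun h' => absurd h' h⟩
  simpa using this

/-- If the counting functions of `A` and `B` satisfy `N_B ≤ N_A + m` with equality at `s`, then
`B` has more points than `A` in each interval ending at `s`, and fewer in each interval
starting there, so `∑ 1 / (s - ·)` is larger for `B`. -/
lemma sum_inv_le (A B : Multiset ℝ) (s : ℝ) (m : ℕ) (hA : ∀ a ∈ A, a ≠ s) (hB : ∀ b ∈ B, b ≠ s)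
    (h : ∀ u, B.countP (· ≤ u) ≤ A.countP (· ≤ u) + m)
    (hs : B.countP (· ≤ s) = A.countP (· ≤ s) + m) :
    (A.map fun z => 1 / (s - z)).sum ≤ (B.map fun z => 1 / (s - z)).sum := by
  have hleft : ((A.filter (· ≤ s)).map fun z => 1 / (s - z)).sum ≤
      ((B.filter (· ≤ s)).map fun z => 1 / (s - z)).sum := by
    refine sum_le_of_countP_le (Set.Iio s) _ ?_ ?_ _ _ ?_ ?_ ?_
    · intro x _ y hy hxy
      have : 0 < s - y := sub_pos.2 hy
      exact one_div_le_one_div_of_le this (by linarith)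
    · intro x hx
      exact one_div_nonneg.2 (sub_pos.2 hx).le
    · intro a ha
      rw [Multiset.mem_filter] at ha
      exact lt_of_le_of_ne ha.2 (hA a ha.1)
    · intro a ha
      rw [Multiset.mem_filter] at ha
      exact lt_of_le_of_ne ha.2 (hB a ha.1)
    · intro u
      rw [Multiset.countP_filter, Multiset.countP_filter]
      by_cases hus : u ≤ s
      · obtain ⟨v, ⟨hvA, hvB⟩, hvu⟩ :=
          (((eventually_nhdsLT A u).and (eventually_nhdsLT B u)).and
            (self_mem_nhdsWithin : Set.Iio u ∈ 𝓝[<] u)).exists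
        have hvu : v < u := hvu
        rw [Multiset.countP_congr (p' := fun x => v < x ∧ x ≤ s) rfl
            (fun a ha => by rw [hvA a ha]),
          Multiset.countP_congr (s := B) (p' := fun x => v < x ∧ x ≤ s) rfl
            (fun a ha => by rw [hvB a ha])]
        have h1 := countP_le_add_countP_Ioc A (u := v) (s := s) (by linarith)
        have h2 := countP_le_add_countP_Ioc B (u := v) (s := s) (by linarith)
        have h3 := h v
        omega
      · rw [Multiset.countP_eq_zero.2]
        · exact Nat.zero_le _
        · intro x _ hx
          exact hus (hx.1.trans hx.2)
  have hright : ((B.filter (¬ · ≤ s)).map fun z => 1 / (z - s)).sum ≤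
      ((A.filter (¬ · ≤ s)).map fun z => 1 / (z - s)).sum := by
    -- Reflect, so that the decreasing function `1 / (z - s)` becomes increasing.
    have hrefl := sum_le_of_countP_le (Set.Iio (-s)) (fun w => 1 / (-w - s)) (by
      intro x _ y hy hxy
      have hy : y < -s := hy
      exact one_div_le_one_div_of_le (by linarith) (by linarith)) (by
      intro x hx
      have hx : x < -s := hx
      exact one_div_nonneg.2 (by linarith))
      ((B.filter (¬ · ≤ s)).map (-·)) ((A.filter (¬ · ≤ s)).map (-·)) (by
      intro a ha
      obtain ⟨b, hb, rfl⟩ := Multiset.mem_map.1 ha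
      exact neg_lt_neg (not_le.1 (Multiset.mem_filter.1 hb).2)) (by
      intro a ha
      obtain ⟨b, hb, rfl⟩ := Multiset.mem_map.1 ha
      exact neg_lt_neg (not_le.1 (Multiset.mem_filter.1 hb).2)) (by
      intro u
      have hcount : ∀ D : Multiset ℝ, ((D.filter (¬ · ≤ s)).map (-·)).countP (u ≤ ·) =
          D.countP (fun x => s < x ∧ x ≤ -u) := by
        intro D
        rw [Multiset.countP_map, ← Multiset.countP_eq_card_filter, Multiset.countP_filter]
        refine Multiset.countP_congr rfl fun x _ => ?_
        rw [not_le, and_comm, le_neg]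
      rw [hcount, hcount]
      by_cases hsv : s ≤ -u
      · have h1 := countP_le_add_countP_Ioc A hsv
        have h2 := countP_le_add_countP_Ioc B hsv
        have h3 := h (-u)
        omega
      · rw [Multiset.countP_eq_zero.2]
        · exact Nat.zero_le _
        · intro x _ hx
          linarith [hx.1, hx.2])
    simpa only [Multiset.map_map, Function.comp_def, neg_neg] using hrefl
  have hneg : ∀ C : Multiset ℝ, (C.map fun z => 1 / (s - z)).sum =
      ((C.filter (· ≤ s)).map fun z => 1 / (s - z)).sum -
      ((C.filter (¬ · ≤ s)).map fun z => 1 / (z - s)).sum := by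
    intro C
    conv_lhs => rw [← Multiset.filter_add_not (· ≤ s) C]
    rw [Multiset.map_add, Multiset.sum_add, sub_eq_add_neg,
      ← Multiset.sum_map_neg (m := C.filter (¬ · ≤ s)) (f := fun z => 1 / (z - s))]
    congr 3
    ext z
    rw [← neg_sub z s, one_div_neg_eq_neg_one_div]
  rw [hneg A, hneg B]
  linarith

/-! ### Derivatives preserve inequalities between counting functions -/

/-- Off the roots, the only way the inequality could fail for the derivatives is that `N_P = N_Q + m`
at `s`, while `P' / P < 0 < Q' / Q` there; `sum_inv_le` gives `Q' / Q ≤ P' / P`, excluding this. -/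
lemma rootCount_derivative_le_of_le {P Q : ℝ[X]} (hP : P.Splits) (hQ : Q.Splits)
    (hdP : P.natDegree ≠ 0) (hdQ : Q.natDegree ≠ 0) (m : ℕ)
    (h : ∀ s, rootCount P s ≤ rootCount Q s + m) (s : ℝ) :
    rootCount (derivative P) s ≤ rootCount (derivative Q) s + m := by
  have hP0 : P ≠ 0 := by rintro rfl; simp at hdP
  have hQ0 : Q ≠ 0 := by rintro rfl; simp at hdQ
  have hPderiv : derivative P ≠ 0 := derivative_ne_zero.2 hdP
  have hQderiv : derivative Q ≠ 0 := derivative_ne_zero.2 hdQ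
  -- By right-continuity of counting functions, `s` may be moved off all roots.
  obtain ⟨v, hv1, hv2, hv3, hv4⟩ := ((eventually_nhdsGT P.roots s).and
    ((eventually_nhdsGT Q.roots s).and ((eventually_nhdsGT (derivative P).roots s).and
    (eventually_nhdsGT (derivative Q).roots s)))).exists
  have key : ∀ R : ℝ[X], (∀ a ∈ R.roots, a ≠ v ∧ (a ≤ v ↔ a ≤ s)) →
      rootCount R s = rootCount R v := fun R hR =>
    Multiset.countP_congr rfl fun a ha => by rw [(hR a ha).2]
  have nz : ∀ R : ℝ[X], R ≠ 0 → (∀ a ∈ R.roots, a ≠ v ∧ (a ≤ v ↔ a ≤ s)) → R.eval v ≠ 0 :=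
    fun R hR0 hR h0 => (hR v ((mem_roots hR0).2 h0)).1 rfl
  rw [key _ hv3, key _ hv4]
  have cP := rootCount_derivative hP hdP (nz _ hP0 hv1) (nz _ hPderiv hv3)
  have cQ := rootCount_derivative hQ hdQ (nz _ hQ0 hv2) (nz _ hQderiv hv4)
  have hv := h v
  rcases cP with ⟨hP1, hP2⟩ | ⟨hP1, _⟩
  · rcases cQ with ⟨hQ1, _⟩ | ⟨hQ1, hQ2⟩
    · omega
    · by_contra hcon
      have heq : rootCount P v = rootCount Q v + m := by omega
      have := sum_inv_le Q.roots P.roots v m (fun a ha => (hv2 a ha).1)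
        (fun a ha => (hv1 a ha).1) h heq
      rw [← hP.eval_derivative_div_eval_of_ne_zero (nz _ hP0 hv1),
        ← hQ.eval_derivative_div_eval_of_ne_zero (nz _ hQ0 hv2)] at this
      linarith
  · rcases cQ with ⟨hQ1, _⟩ | ⟨hQ1, _⟩ <;> omega

lemma splits_iterate {P : ℝ[X]} (hP : P.Splits) (k : ℕ) : (derivative^[k] P).Splits := by
  induction k with
  | zero => exact hP
  | succ k ih => rw [Function.iterate_succ_apply']; exact splits_derivative ih

lemma natDegree_iterate (P : ℝ[X]) (k : ℕ) :
    (derivative^[k] P).natDegree = P.natDegree - k := by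
  induction k with
  | zero => rfl
  | succ k ih => rw [Function.iterate_succ_apply', natDegree_derivative, ih]; omega

lemma rootCount_iterate_le_of_le {P Q : ℝ[X]} (hP : P.Splits) (hQ : Q.Splits)
    (m k : ℕ) (hkP : k ≤ P.natDegree) (hkQ : k ≤ Q.natDegree)
    (h : ∀ s, rootCount P s ≤ rootCount Q s + m) (s : ℝ) :
    rootCount (derivative^[k] P) s ≤ rootCount (derivative^[k] Q) s + m := by
  induction k generalizing s with
  | zero => exact h s
  | succ k ih =>
    rw [Function.iterate_succ_apply', Function.iterate_succ_apply']
    refine rootCount_derivative_le_of_le (splits_iterate hP k) (splits_iterate hQ k) ?_ ?_ m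
      (ih (by omega) (by omega)) s <;> rw [natDegree_iterate] <;> omega

lemma rootCount_comp (P : ℝ[X]) (ε s : ℝ) :
    rootCount (P.comp (X - C ε)) s = rootCount P (s - ε) := by
  have := roots_comp_C_mul_X_add_C P 1 (-ε) isUnit_one
  simp only [map_one, one_mul, map_neg, ← sub_eq_add_neg] at this
  rw [rootCount, this, rootCount, Multiset.countP_map, Multiset.countP_eq_card_filter]
  congr 1
  refine Multiset.filter_congr fun x _ => ?_
  simp
  constructor <;> intro <;> linarith

lemma iterate_derivative_comp_sub (P : ℝ[X]) (ε : ℝ) (k : ℕ) :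
    derivative^[k] (P.comp (X - C ε)) = (derivative^[k] P).comp (X - C ε) := by
  induction k with
  | zero => rfl
  | succ k ih =>
    rw [Function.iterate_succ_apply', Function.iterate_succ_apply', ih, derivative_comp]
    simp

/-- Closeness of root counting functions, up to a shift `ε` and an error `m`, is inherited by
derivatives of any order. -/
lemma rootCount_iterate_shift {P Q : ℝ[X]} (hP : P.Splits) (hQ : Q.Splits)
    (ε : ℝ) (m k : ℕ) (hkP : k ≤ P.natDegree) (hkQ : k ≤ Q.natDegree)
    (h : ∀ s, rootCount P (s - ε) ≤ rootCount Q s + m) (s : ℝ) :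
    rootCount (derivative^[k] P) (s - ε) ≤ rootCount (derivative^[k] Q) s + m := by
  rw [← rootCount_comp, ← iterate_derivative_comp_sub]
  refine rootCount_iterate_le_of_le (hP.comp_X_sub_C ε) hQ m k ?_ hkQ ?_ s
  · rwa [natDegree_comp, natDegree_X_sub_C, mul_one]
  · intro u
    rw [rootCount_comp]
    exact h u

/-! ### Root measures and Lévy closeness -/

lemma sum_dirac_apply (A : Multiset ℝ) {S : Set ℝ} (hS : MeasurableSet S)
    [DecidablePred (· ∈ S)] :
    (A.map Measure.dirac).sum S = (A.countP (· ∈ S) : ENNReal) := by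
  induction A using Multiset.induction_on with
  | empty => simp
  | cons a A ih =>
    rw [Multiset.map_cons, Multiset.sum_cons, Measure.add_apply, ih, Multiset.countP_cons,
      Measure.dirac_apply' _ hS, Set.indicator_apply]
    split_ifs <;> simp [add_comm]

lemma isProbabilityMeasure_rootMeasure {P : ℝ[X]} (hP : P.Splits) (hd : P.natDegree ≠ 0) :
    IsProbabilityMeasure (rootMeasure P) := by
  classical
  constructor
  rw [rootMeasure, Measure.smul_apply, sum_dirac_apply _ MeasurableSet.univ]
  simp only [Set.mem_univ, Multiset.countP_True, splits_iff_card_roots.1 hP, smul_eq_mul]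
  exact ENNReal.inv_mul_cancel (by exact_mod_cast hd) (ENNReal.natCast_ne_top _)

lemma rootMeasure_real_Iic (P : ℝ[X]) (s : ℝ) :
    (rootMeasure P).real (Set.Iic s) = rootCount P s / P.natDegree := by
  rw [measureReal_def, rootMeasure, Measure.smul_apply, sum_dirac_apply _ measurableSet_Iic,
    smul_eq_mul, ENNReal.toReal_mul, ENNReal.toReal_inv, ENNReal.toReal_natCast,
    ENNReal.toReal_natCast, div_eq_inv_mul]
  rfl

/-- Asymptotic one-sided closeness, in Lévy's sense, of two sequences of distribution functions. -/
def LevyBelow (F G : ℕ → ℝ → ℝ) : Prop :=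
  ∀ ε > 0, ∀ᶠ n in atTop, ∀ s, F n (s - ε) ≤ G n s + ε

lemma LevyBelow.trans {F G H : ℕ → ℝ → ℝ} (h₁ : LevyBelow F G) (h₂ : LevyBelow G H) :
    LevyBelow F H := by
  intro ε hε
  filter_upwards [h₁ (ε / 2) (half_pos hε), h₂ (ε / 2) (half_pos hε)] with n a b s
  have a := a (s - ε / 2)
  have b := b s
  rw [sub_sub, add_halves] at a
  linarith

lemma thickening_Iic_subset (ε s : ℝ) : Metric.thickening ε (Set.Iic (s - ε)) ⊆ Set.Iic s := by
  intro x hx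
  obtain ⟨z, hz, hxz⟩ := Metric.mem_thickening_iff.1 hx
  rw [Real.dist_eq, abs_lt] at hxz
  have : z ≤ s - ε := hz
  exact Set.mem_Iic.2 (by linarith)

/-- Weak convergence gives two-sided Lévy closeness, uniformly in the position `s`, because the
Lévy–Prokhorov metric metrizes it. -/
lemma levyBelow_of_tendsto {μs : ℕ → ProbabilityMeasure ℝ} {μ : ProbabilityMeasure ℝ}
    (h : Tendsto μs atTop (𝓝 μ)) :
    LevyBelow (fun n s => (μs n : Measure ℝ).real (Set.Iic s))
      (fun _ s => (μ : Measure ℝ).real (Set.Iic s)) ∧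
    LevyBelow (fun _ s => (μ : Measure ℝ).real (Set.Iic s))
      (fun n s => (μs n : Measure ℝ).real (Set.Iic s)) := by
  have hLP := (LevyProkhorov.probabilityMeasureHomeomorph.continuous.tendsto μ).comp h
  rw [EMetric.tendsto_nhds] at hLP
  have main : ∀ ε > (0 : ℝ), ∀ᶠ n in atTop,
      levyProkhorovEDist (μs n : Measure ℝ) (μ : Measure ℝ) < ENNReal.ofReal ε := fun ε hε =>
    hLP (ENNReal.ofReal ε) (ENNReal.ofReal_pos.2 hε)
  have conv : ∀ (α β : Measure ℝ) [IsProbabilityMeasure α] [IsProbabilityMeasure β] (ε s : ℝ),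
      0 < ε → α (Set.Iic (s - ε)) ≤
        β (Metric.thickening (ENNReal.ofReal ε).toReal (Set.Iic (s - ε))) + ENNReal.ofReal ε →
      α.real (Set.Iic (s - ε)) ≤ β.real (Set.Iic s) + ε := by
    intro α β _ _ ε s hε hle
    rw [ENNReal.toReal_ofReal hε.le] at hle
    have hle := hle.trans (add_le_add_left (measure_mono (thickening_Iic_subset ε s)) _)
    rw [measureReal_def, measureReal_def, ← ENNReal.toReal_ofReal hε.le,
      ← ENNReal.toReal_add (measure_ne_top _ _) ENNReal.ofReal_ne_top,
      ENNReal.toReal_ofReal hε.le]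
    exact ENNReal.toReal_mono (by simp) hle
  refine ⟨fun ε hε => ?_, fun ε hε => ?_⟩
  · filter_upwards [main ε hε] with n hn s
    exact conv _ _ ε s hε (left_measure_le_of_levyProkhorovEDist_lt hn measurableSet_Iic)
  · filter_upwards [main ε hε] with n hn s
    exact conv _ _ ε s hε (right_measure_le_of_levyProkhorovEDist_lt hn measurableSet_Iic)

/-- Lévy closeness to a fixed law gives convergence of distribution functions at the continuity
points of the limit, hence on the π-system of half-open intervals between such points. -/
lemma tendsto_of_levyBelow {μs : ℕ → ProbabilityMeasure ℝ} {μ : ProbabilityMeasure ℝ}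
    (h₁ : LevyBelow (fun n s => (μs n : Measure ℝ).real (Set.Iic s))
      (fun _ s => (μ : Measure ℝ).real (Set.Iic s)))
    (h₂ : LevyBelow (fun _ s => (μ : Measure ℝ).real (Set.Iic s))
      (fun n s => (μs n : Measure ℝ).real (Set.Iic s))) :
    Tendsto μs atTop (𝓝 μ) := by
  set F : ℝ → ℝ := fun s => (μ : Measure ℝ).real (Set.Iic s) with hF
  have hmono : Monotone F := fun x y hxy => measureReal_mono (Set.Iic_subset_Iic.2 hxy)
  have hcont : ∀ a, ContinuousAt F a →
      Tendsto (fun n => (μs n : Measure ℝ).real (Set.Iic a)) atTop (𝓝 (F a)) := by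
    intro a ha
    rw [Metric.tendsto_nhds]
    intro ε hε
    obtain ⟨δ, hδ, hFδ⟩ := Metric.continuousAt_iff.1 ha (ε / 2) (half_pos hε)
    have hη : 0 < min (δ / 2) (ε / 2) := lt_min (half_pos hδ) (half_pos hε)
    set η := min (δ / 2) (ε / 2) with hηdef
    have hη1 : η ≤ δ / 2 := min_le_left _ _
    have hη2 : η ≤ ε / 2 := min_le_right _ _
    filter_upwards [h₁ η hη, h₂ η hη] with n h1 h2
    have h1 := h1 (a + η)
    have h2 := h2 a
    rw [add_sub_cancel_right] at h1
    have h3 := hFδ (x := a + η) (by rw [Real.dist_eq, abs_lt]; constructor <;> linarith)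
    have h4 := hFδ (x := a - η) (by rw [Real.dist_eq, abs_lt]; constructor <;> linarith)
    rw [Real.dist_eq, abs_lt] at h3 h4 ⊢
    constructor <;> linarith
  have hdense : Dense {a | ContinuousAt F a} := by
    have := hmono.countable_not_continuousAt.dense_compl ℝ
    convert this using 1
    ext; simp
  have hIoc : ∀ (ν : Measure ℝ) [IsProbabilityMeasure ν] (a b : ℝ), a < b →
      ν.real (Set.Ioc a b) = ν.real (Set.Iic b) - ν.real (Set.Iic a) := by
    intro ν _ a b hab
    have hset : Set.Ioc a b = Set.Iic b \ Set.Iic a := by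
      ext; simp [and_comm]
    rw [hset, measureReal_sdiff (Set.Iic_subset_Iic.2 hab.le) measurableSet_Iic]
  refine (isPiSystem_Ioc_mem {a | ContinuousAt F a}
    {a | ContinuousAt F a}).tendsto_probabilityMeasure_of_tendsto_of_mem ?_ ?_ ?_
  · rintro _ ⟨a, _, b, _, _, rfl⟩
    exact measurableSet_Ioc
  · intro u hu x hx
    obtain ⟨δ, hδ, hball⟩ := Metric.isOpen_iff.1 hu x hx
    obtain ⟨a, ha, ha'⟩ := hdense.exists_mem_open isOpen_Ioo
      (Set.nonempty_Ioo.2 (show x - δ < x by linarith))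
    obtain ⟨b, hb, hb'⟩ := hdense.exists_mem_open isOpen_Ioo
      (Set.nonempty_Ioo.2 (show x < x + δ by linarith))
    refine ⟨Set.Ioc a b, ⟨a, ha, b, hb, ha'.2.trans hb'.1, rfl⟩,
      Ioc_mem_nhds ha'.2 hb'.1, fun y hy => hball ?_⟩
    rw [Metric.mem_ball, Real.dist_eq, abs_lt]
    constructor <;> linarith [hy.1, hy.2, ha'.1, hb'.2]
  · rintro _ ⟨a, ha, b, hb, hab, rfl⟩
    rw [← NNReal.tendsto_coe]
    have := (hcont b hb).sub (hcont a ha)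
    simp only [hF, ← hIoc _ _ _ hab] at this
    exact this

/-- Lévy closeness of the root distributions is inherited by `k n`-th derivatives, as long as the
degree of the derivative stays comparable to the original degree. -/
lemma levyBelow_iterate {P Q : ℕ → ℝ[X]} (d k : ℕ → ℕ) {t : ℝ} (ht : t ∈ Set.Ioo (0 : ℝ) 1)
    (hP : ∀ n, (P n).Splits) (hQ : ∀ n, (Q n).Splits)
    (hdP : ∀ n, (P n).natDegree = d n) (hdQ : ∀ n, (Q n).natDegree = d n)
    (hd : ∀ n, 0 < d n) (hk : ∀ n, (k n : ℝ) ≤ t * d n)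
    (h : LevyBelow (fun n s => (rootMeasure (P n)).real (Set.Iic s))
      (fun n s => (rootMeasure (Q n)).real (Set.Iic s))) :
    LevyBelow (fun n s => (rootMeasure (derivative^[k n] (P n))).real (Set.Iic s))
      (fun n s => (rootMeasure (derivative^[k n] (Q n))).real (Set.Iic s)) := by
  intro ε hε
  obtain ⟨ht0, ht1⟩ := ht
  -- Passing from degree `d` to degree `d - k ≥ (1 - t) d` magnifies the error by `1 / (1 - t)`.
  have hδ : 0 < (1 - t) * ε := mul_pos (sub_pos.2 ht1) hε
  set δ := (1 - t) * ε with hδdef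
  have hδε : δ ≤ ε := by nlinarith
  filter_upwards [h δ hδ] with n hn s
  have hd0 : (0 : ℝ) < d n := by exact_mod_cast hd n
  have hkd : (k n : ℝ) < d n := by nlinarith [hk n]
  have hkd' : k n < d n := by exact_mod_cast hkd
  simp only [rootMeasure_real_Iic, hdP, hdQ, natDegree_iterate] at hn ⊢
  have hcount : ∀ u, rootCount (P n) (u - δ) ≤ rootCount (Q n) u + ⌊δ * d n⌋₊ := by
    intro u
    have h1 := hn u
    rw [div_add' _ _ _ hd0.ne', div_le_div_iff_of_pos_right hd0] at h1
    by_contra hcon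
    have h2 : rootCount (Q n) u + (⌊δ * d n⌋₊ + 1) ≤ rootCount (P n) (u - δ) := by omega
    have h3 : (rootCount (Q n) u : ℝ) + (⌊δ * d n⌋₊ + 1) ≤ rootCount (P n) (u - δ) := by
      exact_mod_cast h2
    have := Nat.lt_floor_add_one (δ * d n)
    linarith
  have hiter := rootCount_iterate_shift (hP n) (hQ n) δ _ (k n) (by rw [hdP]; omega)
    (by rw [hdQ]; omega) hcount s
  have hmono : rootCount (derivative^[k n] (P n)) (s - ε) ≤
      rootCount (derivative^[k n] (P n)) (s - δ) := by
    rw [rootCount, rootCount, Multiset.countP_eq_card_filter, Multiset.countP_eq_card_filter]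
    exact Multiset.card_le_card
      (Multiset.monotone_filter_right _ fun x hx => by linarith)
  have hfin : (rootCount (derivative^[k n] (P n)) (s - ε) : ℝ) ≤
      rootCount (derivative^[k n] (Q n)) s + ⌊δ * d n⌋₊ := by
    exact_mod_cast hmono.trans hiter
  have hfloor : (⌊δ * d n⌋₊ : ℝ) ≤ δ * d n := Nat.floor_le (by positivity)
  rw [Nat.cast_sub hkd'.le]
  have hpos : (0 : ℝ) < d n - k n := sub_pos.2 hkd
  rw [div_add' _ _ _ hpos.ne', div_le_div_iff_of_pos_right hpos]
  have : δ * d n ≤ ε * (d n - k n) := by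
    rw [hδdef]
    nlinarith [hk n]
  linarith

/-! ### Convergence of the derivative root measures -/

/-- If the empirical root measures of two sequences of real-rooted
degree-`n` polynomials `P_n`, `Q_n` both converge weakly to `μ₀`, and the empirical root
measure of the `⌊tn⌋`-th derivative of `P_n` converges weakly to `μ_t`, then the empirical
root measure of the `⌊tn⌋`-th derivative of `Q_n` also converges weakly to `μ_t`.
Weak convergence is expressed through integrals of bounded continuous functions. -/
theorem stmt2 (t : ℝ) (ht : t ∈ Set.Ioo (0 : ℝ) 1)
    (P Q : ℕ → Polynomial ℝ)
    (hPdeg : ∀ n, 1 ≤ n → (P n).natDegree = n)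
    (hQdeg : ∀ n, 1 ≤ n → (Q n).natDegree = n)
    (hProots : ∀ n, 1 ≤ n → Multiset.card (P n).roots = n)
    (hQroots : ∀ n, 1 ≤ n → Multiset.card (Q n).roots = n)
    (μ0 μt : Measure ℝ) [IsProbabilityMeasure μ0] [IsProbabilityMeasure μt]
    (hconvP0 : ∀ f : BoundedContinuousFunction ℝ ℝ,
      Tendsto (fun n => ∫ x, f x ∂(rootMeasure (P n))) atTop (𝓝 (∫ x, f x ∂μ0)))
    (hconvQ0 : ∀ f : BoundedContinuousFunction ℝ ℝ,
      Tendsto (fun n => ∫ x, f x ∂(rootMeasure (Q n))) atTop (𝓝 (∫ x, f x ∂μ0)))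
    (hconvPt : ∀ f : BoundedContinuousFunction ℝ ℝ,
      Tendsto (fun n : ℕ => ∫ x, f x ∂(rootMeasure (derivative^[⌊t * (n : ℝ)⌋₊] (P n)))) atTop
        (𝓝 (∫ x, f x ∂μt))) :
    ∀ f : BoundedContinuousFunction ℝ ℝ,
      Tendsto (fun n : ℕ => ∫ x, f x ∂(rootMeasure (derivative^[⌊t * (n : ℝ)⌋₊] (Q n)))) atTop
        (𝓝 (∫ x, f x ∂μt)) := by
  have sP : ∀ n, (P (n + 1)).Splits := fun n => by
    rw [splits_iff_card_roots, hProots _ (by omega), hPdeg _ (by omega)]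
  have sQ : ∀ n, (Q (n + 1)).Splits := fun n => by
    rw [splits_iff_card_roots, hQroots _ (by omega), hQdeg _ (by omega)]
  have dP : ∀ n, (P (n + 1)).natDegree = n + 1 := fun n => hPdeg _ (by omega)
  have dQ : ∀ n, (Q (n + 1)).natDegree = n + 1 := fun n => hQdeg _ (by omega)
  set k : ℕ → ℕ := fun n => ⌊t * ((n + 1 : ℕ) : ℝ)⌋₊ with hkdef
  have hk : ∀ n, (k n : ℝ) ≤ t * ((n + 1 : ℕ) : ℝ) := fun n =>
    Nat.floor_le (mul_nonneg ht.1.le (Nat.cast_nonneg _))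
  have hkn : ∀ n, n + 1 - k n ≠ 0 := by
    intro n
    have h1 : (k n : ℝ) < ((n + 1 : ℕ) : ℝ) := by
      have : (0 : ℝ) < ((n + 1 : ℕ) : ℝ) := by positivity
      nlinarith [hk n, ht.2]
    have h2 : k n < n + 1 := by exact_mod_cast h1
    omega
  let mP : ℕ → ProbabilityMeasure ℝ := fun n => ⟨rootMeasure (P (n + 1)),
    isProbabilityMeasure_rootMeasure (sP n) (by rw [dP]; omega)⟩
  let mQ : ℕ → ProbabilityMeasure ℝ := fun n => ⟨rootMeasure (Q (n + 1)),
    isProbabilityMeasure_rootMeasure (sQ n) (by rw [dQ]; omega)⟩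
  let mP' : ℕ → ProbabilityMeasure ℝ := fun n => ⟨rootMeasure (derivative^[k n] (P (n + 1))),
    isProbabilityMeasure_rootMeasure (splits_iterate (sP n) _)
      (by rw [natDegree_iterate, dP]; exact hkn n)⟩
  let mQ' : ℕ → ProbabilityMeasure ℝ := fun n => ⟨rootMeasure (derivative^[k n] (Q (n + 1))),
    isProbabilityMeasure_rootMeasure (splits_iterate (sQ n) _)
      (by rw [natDegree_iterate, dQ]; exact hkn n)⟩
  let ν0 : ProbabilityMeasure ℝ := ⟨μ0, inferInstance⟩
  let νt : ProbabilityMeasure ℝ := ⟨μt, inferInstance⟩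
  have tP : Tendsto mP atTop (𝓝 ν0) :=
    ProbabilityMeasure.tendsto_iff_forall_integral_tendsto.2 fun f =>
      (tendsto_add_atTop_iff_nat 1).2 (hconvP0 f)
  have tQ : Tendsto mQ atTop (𝓝 ν0) :=
    ProbabilityMeasure.tendsto_iff_forall_integral_tendsto.2 fun f =>
      (tendsto_add_atTop_iff_nat 1).2 (hconvQ0 f)
  have tP' : Tendsto mP' atTop (𝓝 νt) :=
    ProbabilityMeasure.tendsto_iff_forall_integral_tendsto.2 fun f =>
      (tendsto_add_atTop_iff_nat 1).2 (hconvPt f)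
  obtain ⟨lP1, lP2⟩ := levyBelow_of_tendsto tP
  obtain ⟨lQ1, lQ2⟩ := levyBelow_of_tendsto tQ
  obtain ⟨lP1', lP2'⟩ := levyBelow_of_tendsto tP'
  have hPQ := levyBelow_iterate (fun n => n + 1) k ht sP sQ dP dQ (fun n => n.succ_pos) hk
    (lP1.trans lQ2)
  have hQP := levyBelow_iterate (fun n => n + 1) k ht sQ sP dQ dP (fun n => n.succ_pos) hk
    (lQ1.trans lP2)
  have tQ' : Tendsto mQ' atTop (𝓝 νt) :=
    tendsto_of_levyBelow (hQP.trans lP1') (lP2'.trans hPQ)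
  intro f
  exact (tendsto_add_atTop_iff_nat 1).1
    (ProbabilityMeasure.tendsto_iff_forall_integral_tendsto.1 tQ' f)
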